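/- arXiv:2001.00507 — 5 statements merged into one kernel-verified Lean document; each statement's English description precedes it below -/
import Mathlib

section
/- Let K, N ∈ ℕ with quadrature points ξ₀, …, ξ_N ∈ [−1,1] and weights ω*₀, …, ω*_N giving a quadrature rule that is exact on P_{2K}, let Δx > 0, and let u : ℝ → P_K be a differentiable family of polynomials of degree at most K. Suppose there exist a function F : ℝ → P_K and functions f_L, f_R : ℝ → ℝ such that the DGDLS scheme holds: for all t and all v ∈ P_K, (Δx/2) · Σ_{n=0}^N ω*_n (∂_t u)(t, ξ_n) v(ξ_n) = Σ_{n=0}^N ω*_n F(t, ξ_n) v'(ξ_n) − [ f_R(t) v(1) − f_L(t) v(−1) ]. Then the element is locally conservative: for all t, (Δx/2) · (d/dt) ∫_{−1}^1 u(t,ξ) dξ = −[ f_R(t) − f_L(t) ]. -/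
theorem dgdls_local_conservation
    (K N : ℕ)
    (ξ : Fin (N + 1) → ℝ) (hξ : ∀ n, ξ n ∈ Set.Icc (-1 : ℝ) 1)
    (ω : Fin (N + 1) → ℝ)
    (hexact : ∀ q : Polynomial ℝ, q.degree ≤ (2 * K : ℕ) →
      ∑ n : Fin (N + 1), ω n * q.eval (ξ n) = ∫ x in (-1 : ℝ)..1, q.eval x)
    (Δx : ℝ) (hΔx : 0 < Δx)
    (u du : ℝ → Polynomial ℝ)
    (hu : ∀ t, (u t).degree ≤ K) (hdu : ∀ t, (du t).degree ≤ K)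
    (hderiv : ∀ t x : ℝ, HasDerivAt (fun s => (u s).eval x) ((du t).eval x) t)
    (F : ℝ → Polynomial ℝ) (hF : ∀ t, (F t).degree ≤ K)
    (fL fR : ℝ → ℝ)
    (scheme : ∀ t : ℝ, ∀ v : Polynomial ℝ, v.degree ≤ K →
      Δx / 2 * ∑ n : Fin (N + 1), ω n * (du t).eval (ξ n) * v.eval (ξ n) =
        (∑ n : Fin (N + 1), ω n * (F t).eval (ξ n) * v.derivative.eval (ξ n)) -
          (fR t * v.eval 1 - fL t * v.eval (-1)))
    (t : ℝ) :
    HasDerivAt (fun s => Δx / 2 * ∫ x in (-1 : ℝ)..1, (u s).eval x)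
      (-(fR t - fL t)) t := by
  have hint : ∀ s, ∫ x in (-1 : ℝ)..1, (u s).eval x = ∑ n : Fin (N + 1), ω n * (u s).eval (ξ n) := by
    intro s
    refine (hexact (u s) ((hu s).trans ?_)).symm
    exact_mod_cast (by omega : K ≤ 2 * K)
  simp only [hint]
  have h1 := scheme t 1 (by rw [Polynomial.degree_one]; exact_mod_cast Nat.zero_le K)
  simp only [Polynomial.eval_one, mul_one, Polynomial.derivative_one, Polynomial.eval_zero,
    mul_zero, Finset.sum_const_zero, zero_sub] at h1
  rw [← h1]
  exact (HasDerivAt.fun_sum fun n _ => (hderiv t (ξ n)).const_mul (ω n)).const_mul (Δx / 2)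
end

section
/- Let I ≥ 1 and fix for each element i ∈ {1,…,I} a length Δx_i > 0 and a differentiable family u^i : ℝ → P_K, together with interface flux functions g_0, g_1, …, g_I : ℝ → ℝ satisfying the periodicity condition g_0 = g_I. Suppose a quadrature rule with points ξ₀, …, ξ_N ∈ [−1,1] and weights ω*₀, …, ω*_N exact on P_{2K} is given, and that each element satisfies the DGDLS scheme: for all t and all v ∈ P_K, (Δx_i/2) · Σ_{n=0}^N ω*_n (∂_t u^i)(t, ξ_n) v(ξ_n) = Σ_{n=0}^N ω*_n F^i(t, ξ_n) v'(ξ_n) − [ g_i(t) v(1) − g_{i−1}(t) v(−1) ] for some F^i(t,·) ∈ P_K. Then the total mass is conserved: for all t, (d/dt) Σ_{i=1}^I (Δx_i/2) ∫_{−1}^1 u^i(t,ξ) dξ = 0. -/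
theorem dgdls_global_conservation
    (K N I : ℕ) (hI : 1 ≤ I)
    (ξ : Fin (N + 1) → ℝ) (hξ : ∀ n, ξ n ∈ Set.Icc (-1 : ℝ) 1)
    (ω : Fin (N + 1) → ℝ)
    (hexact : ∀ q : Polynomial ℝ, q.degree ≤ (2 * K : ℕ) →
      ∑ n : Fin (N + 1), ω n * q.eval (ξ n) = ∫ x in (-1 : ℝ)..1, q.eval x)
    (Δx : Fin I → ℝ) (hΔx : ∀ i, 0 < Δx i)
    (u du : Fin I → ℝ → Polynomial ℝ)
    (hu : ∀ i t, (u i t).degree ≤ K) (hdu : ∀ i t, (du i t).degree ≤ K)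
    (hderiv : ∀ i, ∀ t x : ℝ,
      HasDerivAt (fun s => (u i s).eval x) ((du i t).eval x) t)
    (F : Fin I → ℝ → Polynomial ℝ) (hF : ∀ i t, (F i t).degree ≤ K)
    (g : Fin (I + 1) → ℝ → ℝ) (hper : g 0 = g (Fin.last I))
    (scheme : ∀ i : Fin I, ∀ t : ℝ, ∀ v : Polynomial ℝ, v.degree ≤ K →
      Δx i / 2 * ∑ n : Fin (N + 1), ω n * (du i t).eval (ξ n) * v.eval (ξ n) =
        (∑ n : Fin (N + 1), ω n * (F i t).eval (ξ n) * v.derivative.eval (ξ n)) -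
          (g i.succ t * v.eval 1 - g i.castSucc t * v.eval (-1)))
    (t : ℝ) :
    HasDerivAt
      (fun s => ∑ i : Fin I, Δx i / 2 * ∫ x in (-1 : ℝ)..1, (u i s).eval x)
      0 t := by
  have hle : ((K : ℕ) : WithBot ℕ) ≤ ((2 * K : ℕ) : WithBot ℕ) := by
    exact_mod_cast (by omega : K ≤ 2 * K)
  have hfun : (fun s => ∑ i : Fin I, Δx i / 2 * ∫ x in (-1 : ℝ)..1, (u i s).eval x) =
      fun s => ∑ i : Fin I, Δx i / 2 * ∑ n : Fin (N + 1), ω n * (u i s).eval (ξ n) := by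
    funext s
    refine Finset.sum_congr rfl fun i _ => ?_
    rw [hexact _ ((hu i s).trans hle)]
  have hzero : ∑ i : Fin I, Δx i / 2 * ∑ n : Fin (N + 1), ω n * (du i t).eval (ξ n) = 0 := by
    have h1 : ∀ i : Fin I, Δx i / 2 * ∑ n : Fin (N + 1), ω n * (du i t).eval (ξ n) =
        g i.castSucc t - g i.succ t := by
      intro i
      have hd : (1 : Polynomial ℝ).degree ≤ (K : WithBot ℕ) := by
        rw [Polynomial.degree_one]
        exact_mod_cast Nat.zero_le K
      have h := scheme i t 1 hd
      simp only [Polynomial.eval_one, mul_one, Polynomial.derivative_one, Polynomial.eval_zero,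
        mul_zero, Finset.sum_const_zero] at h
      rw [h]; ring
    rw [Finset.sum_congr rfl fun i _ => h1 i, Finset.sum_sub_distrib]
    have h2 := Fin.sum_univ_castSucc (fun j => g j t)
    have h3 := Fin.sum_univ_succ (fun j => g j t)
    have h4 := congrFun hper t
    linarith
  rw [hfun, ← hzero]
  exact HasDerivAt.fun_sum fun i _ => HasDerivAt.const_mul _
    (HasDerivAt.fun_sum fun n _ => (hderiv i t (ξ n)).const_mul _)
end

section
/- Let K, N ∈ ℕ with quadrature points ξ₀, …, ξ_N ∈ [−1,1] and weights ω*₀, …, ω*_N giving a quadrature rule exact on P_{2K}, let Δx > 0, and let u : ℝ → P_K be a differentiable family of polynomials of degree at most K. Suppose the DGDLS scheme for the linear advection equation holds (flux F = u): for all t and all v ∈ P_K, (Δx/2) · Σ_{n=0}^N ω*_n (∂_t u)(t, ξ_n) v(ξ_n) = Σ_{n=0}^N ω*_n u(t, ξ_n) v'(ξ_n) − [ f_R(t) v(1) − f_L(t) v(−1) ] for given f_L, f_R : ℝ → ℝ. Then the local energy rate satisfies, for all t, (Δx/2) · (d/dt) ∫_{−1}^1 u(t,ξ)² dξ = u(t,1)·[u(t,1)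 − 2 f_R(t)] − u(t,−1)·[u(t,−1) − 2 f_L(t)]. -/
theorem dgdls_local_energy_rate_linear_advection
    (K N : ℕ)
    (ξ : Fin (N + 1) → ℝ) (hξ : ∀ n, ξ n ∈ Set.Icc (-1 : ℝ) 1)
    (ω : Fin (N + 1) → ℝ)
    (hexact : ∀ q : Polynomial ℝ, q.degree ≤ (2 * K : ℕ) →
      ∑ n : Fin (N + 1), ω n * q.eval (ξ n) = ∫ x in (-1 : ℝ)..1, q.eval x)
    (Δx : ℝ) (hΔx : 0 < Δx)
    (u du : ℝ → Polynomial ℝ)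
    (hu : ∀ t, (u t).degree ≤ K) (hdu : ∀ t, (du t).degree ≤ K)
    (hderiv : ∀ t x : ℝ, HasDerivAt (fun s => (u s).eval x) ((du t).eval x) t)
    (fL fR : ℝ → ℝ)
    (scheme : ∀ t : ℝ, ∀ v : Polynomial ℝ, v.degree ≤ K →
      Δx / 2 * ∑ n : Fin (N + 1), ω n * (du t).eval (ξ n) * v.eval (ξ n) =
        (∑ n : Fin (N + 1), ω n * (u t).eval (ξ n) * v.derivative.eval (ξ n)) -
          (fR t * v.eval 1 - fL t * v.eval (-1)))
    (t : ℝ) :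
    HasDerivAt (fun s => Δx / 2 * ∫ x in (-1 : ℝ)..1, ((u s).eval x) ^ 2)
      ((u t).eval 1 * ((u t).eval 1 - 2 * fR t) -
        (u t).eval (-1) * ((u t).eval (-1) - 2 * fL t)) t := by
  have h1 : ∀ s, ∫ x in (-1 : ℝ)..1, ((u s).eval x) ^ 2 =
      ∑ n : Fin (N + 1), ω n * ((u s).eval (ξ n)) ^ 2 := by
    intro s
    have hd : ((u s) ^ 2).degree ≤ (2 * K : ℕ) := by
      apply Polynomial.degree_le_of_natDegree_le
      exact Polynomial.natDegree_pow_le_of_le 2 (Polynomial.natDegree_le_of_degree_le (hu s))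
    have := hexact _ hd
    simp only [Polynomial.eval_pow] at this
    exact this.symm
  have hd2 : ((u t) * (u t).derivative).degree ≤ (2 * K : ℕ) := by
    apply Polynomial.degree_le_of_natDegree_le
    have ha := Polynomial.natDegree_le_of_degree_le (hu t)
    have hb := Polynomial.natDegree_derivative_le (u t)
    have hc := Polynomial.natDegree_mul_le (p := u t) (q := (u t).derivative)
    omega
  have h2 := hexact _ hd2
  have h3 : ∫ x in (-1 : ℝ)..1, ((u t) * (u t).derivative).eval x =
      ((u t).eval 1) ^ 2 / 2 - ((u t).eval (-1)) ^ 2 / 2 := by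
    apply intervalIntegral.integral_eq_sub_of_hasDerivAt (f := fun x => ((u t).eval x) ^ 2 / 2)
    · intro x _
      refine ((((u t).hasDerivAt x).pow 2).div_const 2).congr_deriv ?_
      simp only [Polynomial.eval_mul]
      norm_num
      ring
    · exact (Polynomial.continuous _).intervalIntegrable _ _
  rw [h3] at h2
  have h4 := scheme t (u t) (hu t)
  have h5 : ∑ n : Fin (N + 1), ω n * (u t).eval (ξ n) * (u t).derivative.eval (ξ n) =
      ((u t).eval 1) ^ 2 / 2 - ((u t).eval (-1)) ^ 2 / 2 := by
    rw [← h2]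
    simp only [Polynomial.eval_mul, mul_assoc]
  rw [h5] at h4
  simp only [h1]
  have h6 : HasDerivAt (fun s => ∑ n : Fin (N + 1), ω n * ((u s).eval (ξ n)) ^ 2)
      (∑ n : Fin (N + 1), 2 * (ω n * (du t).eval (ξ n) * (u t).eval (ξ n))) t := by
    apply HasDerivAt.fun_sum
    intro n _
    refine (((hderiv t (ξ n)).pow 2).const_mul (ω n)).congr_deriv ?_
    norm_num
    ring
  refine (h6.const_mul (Δx / 2)).congr_deriv ?_
  rw [← Finset.mul_sum]
  linear_combination 2 * h4
end

section
/- Let I ≥ 1 and, for each element i ∈ {1,…,I} (indices taken modulo I to encode periodic boundary conditions), let Δx_i > 0 and let u^i : ℝ → P_K be a differentiable family of polynomials of degree at most K. Suppose a quadrature rule with points ξ₀, …, ξ_N ∈ [−1,1] and weights ω*₀, …, ω*_N exact on P_{2K} is given, and that each element satisfies the DGDLS scheme for the linear advection equation with the full upwind numerical flux: for all t and all v ∈ P_K, (Δx_i/2) · Σ_{n=0}^N ω*_n (∂_t u^i)(t, ξ_n) v(ξ_n) = Σ_{n=0}^N ω*_n u^i(t, ξ_n) v'(ξ_n) − [ u^i(t,1)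 v(1) − u^{i−1}(t,1) v(−1) ]. Then the scheme is L²-stable: for all t, (d/dt) Σ_{i=1}^I (Δx_i/2) ∫_{−1}^1 u^i(t,ξ)² dξ = − Σ_{i=1}^I ( u^i(t,1) − u^{i+1}(t,−1) )² ≤ 0. -/
theorem dgdls_l2_stability_linear_advection_upwind
    (K N I : ℕ) (hI : 1 ≤ I) [NeZero I]
    (ξ : Fin (N + 1) → ℝ) (hξ : ∀ n, ξ n ∈ Set.Icc (-1 : ℝ) 1)
    (ω : Fin (N + 1) → ℝ)
    (hexact : ∀ q : Polynomial ℝ, q.degree ≤ (2 * K : ℕ) →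
      ∑ n : Fin (N + 1), ω n * q.eval (ξ n) = ∫ x in (-1 : ℝ)..1, q.eval x)
    (Δx : Fin I → ℝ) (hΔx : ∀ i, 0 < Δx i)
    (u du : Fin I → ℝ → Polynomial ℝ)
    (hu : ∀ i t, (u i t).degree ≤ K) (hdu : ∀ i t, (du i t).degree ≤ K)
    (hderiv : ∀ i, ∀ t x : ℝ,
      HasDerivAt (fun s => (u i s).eval x) ((du i t).eval x) t)
    (scheme : ∀ i : Fin I, ∀ t : ℝ, ∀ v : Polynomial ℝ, v.degree ≤ K →
      Δx i / 2 * ∑ n : Fin (N + 1), ω n * (du i t).eval (ξ n) * v.eval (ξ n) =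
        (∑ n : Fin (N + 1), ω n * (u i t).eval (ξ n) * v.derivative.eval (ξ n)) -
          ((u i t).eval 1 * v.eval 1 - (u (i - 1) t).eval 1 * v.eval (-1)))
    (t : ℝ) :
    HasDerivAt
      (fun s => ∑ i : Fin I, Δx i / 2 * ∫ x in (-1 : ℝ)..1, ((u i s).eval x) ^ 2)
      (-∑ i : Fin I, ((u i t).eval 1 - (u (i + 1) t).eval (-1)) ^ 2) t ∧
    -∑ i : Fin I, ((u i t).eval 1 - (u (i + 1) t).eval (-1)) ^ 2 ≤ 0 := by
  refine ⟨?_, by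
    rw [neg_nonpos]
    exact Finset.sum_nonneg fun i _ => sq_nonneg _⟩
  have hmul : ∀ p q : Polynomial ℝ, p.degree ≤ K → q.degree ≤ K →
      (p * q).degree ≤ (2 * K : ℕ) := by
    intro p q hp hq
    have hp' := Polynomial.natDegree_le_iff_degree_le.mpr hp
    have hq' := Polynomial.natDegree_le_iff_degree_le.mpr hq
    apply Polynomial.natDegree_le_iff_degree_le.mp
    have := Polynomial.natDegree_mul_le (p := p) (q := q)
    omega
  have hE : ∀ i s, ∫ x in (-1 : ℝ)..1, ((u i s).eval x) ^ 2 =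
      ∑ n, ω n * ((u i s).eval (ξ n)) ^ 2 := by
    intro i s
    have h := hexact (u i s * u i s) (hmul _ _ (hu i s) (hu i s))
    simp only [← sq, Polynomial.eval_pow] at h
    exact h.symm
  have hP : ∀ i, ∑ n, ω n * (u i t).eval (ξ n) * (u i t).derivative.eval (ξ n) =
      ((u i t).eval 1 ^ 2 - (u i t).eval (-1) ^ 2) / 2 := by
    intro i
    have h := hexact (u i t * (u i t).derivative) (hmul _ _ (hu i t)
      ((Polynomial.degree_derivative_le).trans (hu i t)))
    have h2 : ∫ x in (-1 : ℝ)..1, (u i t * (u i t).derivative).eval x =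
        (u i t).eval 1 ^ 2 / 2 - (u i t).eval (-1) ^ 2 / 2 := by
      apply intervalIntegral.integral_eq_sub_of_hasDerivAt
        (f := fun x => (u i t).eval x ^ 2 / 2)
      · intro x _
        have h3 := (((u i t).hasDerivAt x).fun_pow 2).div_const 2
        refine h3.congr_deriv ?_
        rw [Polynomial.eval_mul]
        push_cast
        ring
      · exact (Polynomial.continuous _).intervalIntegrable _ _
    rw [h2] at h
    simp only [Polynomial.eval_mul, ← mul_assoc] at h
    rw [h]
    ring
  simp only [hE]
  have hD : HasDerivAt (fun s => ∑ i : Fin I, Δx i / 2 * ∑ n, ω n * ((u i s).eval (ξ n)) ^ 2)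
      (∑ i : Fin I, Δx i / 2 * ∑ n, ω n * (2 * (u i t).eval (ξ n) * (du i t).eval (ξ n))) t := by
    refine HasDerivAt.fun_sum fun i _ => HasDerivAt.const_mul _ (HasDerivAt.fun_sum fun n _ =>
      HasDerivAt.const_mul _ ?_)
    simpa using (hderiv i t (ξ n)).fun_pow 2
  convert hD using 1
  have h1 : ∀ i : Fin I, Δx i / 2 * ∑ n, ω n * (2 * (u i t).eval (ξ n) * (du i t).eval (ξ n)) =
      -((u i t).eval 1 ^ 2) - ((u i t).eval (-1) ^ 2
        - 2 * (u (i - 1) t).eval 1 * (u i t).eval (-1)) := by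
    intro i
    have h := scheme i t (u i t) (hu i t)
    rw [hP] at h
    have e : ∑ n, ω n * (2 * (u i t).eval (ξ n) * (du i t).eval (ξ n)) =
        2 * ∑ n, ω n * (du i t).eval (ξ n) * (u i t).eval (ξ n) := by
      rw [Finset.mul_sum]
      exact Finset.sum_congr rfl fun n _ => by ring
    rw [e]
    linear_combination 2 * h
  rw [Finset.sum_congr rfl fun i _ => h1 i, Finset.sum_sub_distrib]
  have h2 := Equiv.sum_comp (Equiv.addRight (1 : Fin I)) (fun i => (u i t).eval (-1) ^ 2
        - 2 * (u (i - 1) t).eval 1 * (u i t).eval (-1))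
  rw [← h2, ← Finset.sum_sub_distrib, ← Finset.sum_neg_distrib]
  refine Finset.sum_congr rfl fun i _ => ?_
  simp only [Equiv.coe_addRight, add_sub_cancel_right]
  ring
end

section
/- Let V be a real normed vector space, L : V → V a map, and Δt > 0 such that the explicit Euler step is nonexpansive: ‖w + Δt·L(w)‖ ≤ ‖w‖ for all w ∈ V. Then one step of the third-order strong stability preserving Runge–Kutta method SSPRK(3,3) is also nonexpansive: for any u ∈ V, defining u⁽¹⁾ = u + Δt·L(u), u⁽²⁾ = (3/4)u + (1/4)u⁽¹⁾ + (1/4)Δt·L(u⁽¹⁾), and u⁺ = (1/3)u + (2/3)u⁽²⁾ + (2/3)Δt·L(u⁽²⁾), one has ‖u⁺‖ ≤ ‖u‖. -/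
theorem ssprk33_nonexpansive
    {V : Type*} [NormedAddCommGroup V] [NormedSpace ℝ V]
    (L : V → V) (Δt : ℝ) (hΔt : 0 < Δt)
    (heuler : ∀ w : V, ‖w + Δt • L w‖ ≤ ‖w‖)
    (u u1 u2 uplus : V)
    (h1 : u1 = u + Δt • L u)
    (h2 : u2 = (3 / 4 : ℝ) • u + (1 / 4 : ℝ) • u1 + ((1 / 4 : ℝ) * Δt) • L u1)
    (h3 : uplus = (1 / 3 : ℝ) • u + (2 / 3 : ℝ) • u2 + ((2 / 3 : ℝ) * Δt) • L u2) :
    ‖uplus‖ ≤ ‖u‖ := by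
  have key : ∀ (a b : ℝ) (x y : V), 0 ≤ a → 0 ≤ b →
      ‖a • x + b • y + (b * Δt) • L y‖ ≤ a * ‖x‖ + b * ‖y‖ := by
    intro a b x y ha hb
    have e : a • x + b • y + (b * Δt) • L y = a • x + b • (y + Δt • L y) := by
      rw [smul_add, smul_smul, add_assoc]
    rw [e]
    refine (norm_add_le _ _).trans ?_
    rw [norm_smul, norm_smul, Real.norm_of_nonneg ha, Real.norm_of_nonneg hb]
    have := mul_le_mul_of_nonneg_left (heuler y) hb
    linarith
  have n1 : ‖u1‖ ≤ ‖u‖ := h1 ▸ heuler u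
  have n2 := key (3 / 4) (1 / 4) u u1 (by norm_num) (by norm_num)
  rw [← h2] at n2
  have n3 := key (1 / 3) (2 / 3) u u2 (by norm_num) (by norm_num)
  rw [← h3] at n3
  linarith
end
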